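/- Let π be a permutation gate in 𝒞₃ in staircase form, and let the corresponding descending multiplication on 𝔽₂ⁿ be defined by eᵢeⱼ := π(eᵢ+eⱼ) + eᵢ + eⱼ extended bilinearly. Then the following are equivalent: (1) π is semi-Clifford; (2) π⁻¹ ∈ 𝒞₃; (3) every coordinate of the polynomial representation of π has degree at most 2; (4) eᵢeⱼeₖ = 0 for all indices i, j, k ∈ [n]. -/

import Mathlib

/-! Common framework: qubit gates, the Pauli group, the Clifford hierarchy,
permutation gates, Toffoli gates and staircase form, descending multiplications,
multilinear polynomial representations. -/

/-- Vectors in `𝔽₂ⁿ`, indexing computational basis states. -/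
abbrev QV (n : ℕ) := Fin n → ZMod 2

/-- `n`-qubit gates: `2ⁿ × 2ⁿ` complex matrices indexed by `𝔽₂ⁿ`. -/
abbrev QMat (n : ℕ) := Matrix (QV n) (QV n) ℂ

/-- Standard basis vector `eᵢ` of `𝔽₂ⁿ`. -/
def stdBasis (n : ℕ) (i : Fin n) : QV n := fun m => if m = i then 1 else 0

/-- The gate `X^u Z^z`, sending `|b⟩` to `(-1)^(z·b) |b+u⟩`. -/
noncomputable def XZGate (n : ℕ) (u z : QV n) : QMat n :=
  fun a b => if a = b + u then (-1 : ℂ) ^ (∑ i, (z i).val * (b i).val) else 0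

/-- The Pauli group on `n` qubits: gates `c·P₁⊗⋯⊗Pₙ`, `c ∈ {±1, ±i}`,
`Pᵢ ∈ {I,X,Y,Z}`, equivalently phases times `X^u Z^z`. -/
def PauliGroup (n : ℕ) : Set (QMat n) :=
  { P | ∃ (c : ℂ) (u z : QV n),
      (c = 1 ∨ c = -1 ∨ c = Complex.I ∨ c = -Complex.I) ∧ P = c • XZGate n u z }

/-- Level `k` of the Clifford hierarchy `𝒞ₖ` (level 1 is the Pauli group,
level 2 the Clifford group; level 0 is junk/empty). -/
def CliffordLevel (n : ℕ) : ℕ → Set (QMat n)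
  | 0 => ∅
  | 1 => PauliGroup n
  | (k+2) => { U | U ∈ Matrix.unitaryGroup (QV n) ℂ ∧
      ∀ P ∈ PauliGroup n, U * P * star U ∈ CliffordLevel n (k+1) }

/-- The permutation gate of a permutation `f` of `𝔽₂ⁿ`: sends `|v⟩` to `|f v⟩`. -/
noncomputable def permGate (n : ℕ) (f : QV n ≃ QV n) : QMat n :=
  fun a b => if a = f b then 1 else 0

/-- A diagonal gate. -/
def IsDiagonal (n : ℕ) (d : QMat n) : Prop := ∀ a b : QV n, a ≠ b → d a b = 0

/-- A gate is semi-Clifford if it equals `φ₁ d φ₂` for Clifford `φ₁, φ₂` and diagonal `d`. -/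
def IsSemiClifford (n : ℕ) (U : QMat n) : Prop :=
  ∃ φ₁ d φ₂ : QMat n, φ₁ ∈ CliffordLevel n 2 ∧ φ₂ ∈ CliffordLevel n 2 ∧
    IsDiagonal n d ∧ U = φ₁ * d * φ₂

/-- The underlying map of the Toffoli gate `TOF_{i,j,k}`: `v ↦ v + (vᵢvⱼ)·eₖ`. -/
def tofFun (n : ℕ) (i j k : Fin n) (v : QV n) : QV n :=
  fun m => if m = k then v m + v i * v j else v m

/-- A map on `𝔽₂ⁿ` is in staircase form if it is a product (applied left-to-right)
of pairwise distinct Toffoli gates `TOF_{i,j,k}` with `i<j<k` and with targets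
nondecreasing in the order the gates are applied. -/
def IsStaircase (n : ℕ) (g : QV n → QV n) : Prop :=
  ∃ L : List (Fin n × Fin n × Fin n),
    L.Nodup ∧
    (∀ t ∈ L, t.1 < t.2.1 ∧ t.2.1 < t.2.2) ∧
    List.Chain' (fun s t => s.2.2 ≤ t.2.2) L ∧
    g = fun v => L.foldl (fun w t => tofFun n t.1 t.2.1 t.2.2 w) v

/-- A descending multiplication on `𝔽₂ⁿ`: bilinear, associative, commutative,
`eᵢeᵢ = 0`, and for `i < j`, `eᵢeⱼ ∈ span{eₖ : k > j}`. -/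
def IsDescendingMul (n : ℕ) (mul : QV n → QV n → QV n) : Prop :=
  (∀ u v w : QV n, mul (u + v) w = mul u w + mul v w) ∧
  (∀ u v w : QV n, mul u (v + w) = mul u v + mul u w) ∧
  (∀ u v w : QV n, mul (mul u v) w = mul u (mul v w)) ∧
  (∀ u v : QV n, mul u v = mul v u) ∧
  (∀ i : Fin n, mul (stdBasis n i) (stdBasis n i) = 0) ∧
  (∀ i j : Fin n, i < j → ∀ m : Fin n, m ≤ j → mul (stdBasis n i) (stdBasis n j) m = 0)

/-- The product `∏_{i ∈ l} eᵢ` under a multiplication, for a list `l` (junk `0` on `[]`). -/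
def dmProdList (n : ℕ) (mul : QV n → QV n → QV n) : List (Fin n) → QV n
  | [] => 0
  | [i] => stdBasis n i
  | i :: j :: rest => mul (stdBasis n i) (dmProdList n mul (j :: rest))

/-- The product `∏_{i ∈ T} eᵢ` under a multiplication. -/
def dmProd (n : ℕ) (mul : QV n → QV n → QV n) (T : Finset (Fin n)) : QV n :=
  dmProdList n mul (T.sort (· ≤ ·))

/-- `g` is the map `∑_{i∈S} eᵢ ↦ ∑_{∅≠T⊆S} ∏_{i∈T} eᵢ` associated to a multiplication. -/
def dmPiSpec (n : ℕ) (mul : QV n → QV n → QV n) (g : QV n → QV n) : Prop :=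
  ∀ S : Finset (Fin n),
    g (∑ i ∈ S, stdBasis n i) = ∑ T ∈ S.powerset.erase ∅, dmProd n mul T

/-- The bilinear extension of `eᵢeⱼ := g(eᵢ+eⱼ) + eᵢ + eⱼ`. -/
def inducedMul (n : ℕ) (g : QV n → QV n) (u v : QV n) : QV n :=
  ∑ i : Fin n, ∑ j : Fin n,
    (u i * v j) • (g (stdBasis n i + stdBasis n j) + stdBasis n i + stdBasis n j)

/-- Coefficient of the monomial `∏_{i∈T} aᵢ` in the unique multilinear polynomial
over `𝔽₂` representing `g : 𝔽₂ⁿ → 𝔽₂` (Möbius inversion over `𝔽₂`). -/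
def mlCoeff (n : ℕ) (g : QV n → ZMod 2) (T : Finset (Fin n)) : ZMod 2 :=
  ∑ R ∈ T.powerset, g (∑ i ∈ R, stdBasis n i)

/-- Strictly lower triangular matrix. -/
def StrictLowerTri (n : ℕ) (A : Matrix (Fin n) (Fin n) (ZMod 2)) : Prop :=
  ∀ p q : Fin n, p ≤ q → A p q = 0

/-- Multiplication of basis vectors for the gate `U_k`: the basis of `𝔽₂^(2^k-1)` is
indexed by nonempty subsets `S ⊆ [k]`, encoded as indices `a` via the binary digits of
`a+1`; `e_S e_T = e_{S∪T}` if `S ∩ T = ∅` and `e_S e_T = 0` otherwise. -/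
def ukBasisMul (k : ℕ) (a b : Fin (2 ^ k - 1)) : QV (2 ^ k - 1) :=
  if (a.val + 1) &&& (b.val + 1) = 0 then
    (if h : a.val + b.val + 1 < 2 ^ k - 1 then stdBasis (2 ^ k - 1) ⟨a.val + b.val + 1, h⟩
     else 0)
  else 0

/-- The descending multiplication defining `U_k`, extended bilinearly. -/
def ukMul (k : ℕ) (u v : QV (2 ^ k - 1)) : QV (2 ^ k - 1) :=
  ∑ a : Fin (2 ^ k - 1), ∑ b : Fin (2 ^ k - 1), (u a * v b) • ukBasisMul k a b


section AlgebraPart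

theorem qv_self {n : ℕ} (x : QV n) : x + x = 0 := by
  funext i; exact CharTwo.add_self_eq_zero (x i)

theorem qv_two {n : ℕ} : (2 : QV n) = 0 := by
  funext i; rfl

theorem qv_eq_sum {n : ℕ} (x : QV n) : x = ∑ i, x i • stdBasis n i := by
  funext m
  simp [stdBasis, Finset.sum_apply]

theorem qv_induct {n : ℕ} {p : QV n → Prop} (h0 : p 0)
    (h : ∀ x i, p x → p (x + stdBasis n i)) : ∀ x, p x := by
  intro x
  rw [qv_eq_sum x]
  induction (Finset.univ : Finset (Fin n)) using Finset.induction_on with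
  | empty => simpa using h0
  | insert a s ha ih =>
    rw [Finset.sum_insert ha, add_comm]
    have : x a = 0 ∨ x a = 1 := by generalize x a = t; revert t; decide
    rcases this with hx | hx
    · simpa [hx] using ih
    · simpa [hx] using h _ a ih

theorem iMul_add_left {n : ℕ} (g : QV n → QV n) (u v w : QV n) :
    inducedMul n g (u + v) w = inducedMul n g u w + inducedMul n g v w := by
  simp only [inducedMul, Pi.add_apply, add_mul, add_smul, Finset.sum_add_distrib]

theorem iMul_comm {n : ℕ} (g : QV n → QV n) (u v : QV n) :
    inducedMul n g u v = inducedMul n g v u := by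
  unfold inducedMul
  rw [Finset.sum_comm]
  refine Finset.sum_congr rfl fun i _ => Finset.sum_congr rfl fun j _ => ?_
  rw [mul_comm (u j), add_comm (stdBasis n j) (stdBasis n i), add_assoc, add_assoc,
    add_comm (stdBasis n j) (stdBasis n i)]

theorem iMul_add_right {n : ℕ} (g : QV n → QV n) (u v w : QV n) :
    inducedMul n g u (v + w) = inducedMul n g u v + inducedMul n g u w := by
  rw [iMul_comm, iMul_add_left, iMul_comm g v, iMul_comm g w]

theorem iMul_zero_left {n : ℕ} (g : QV n → QV n) (u : QV n) :
    inducedMul n g 0 u = 0 := by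
  simp [inducedMul]

theorem iMul_zero_right {n : ℕ} (g : QV n → QV n) (u : QV n) :
    inducedMul n g u 0 = 0 := by
  simp [inducedMul]

theorem iMul_basis {n : ℕ} (g : QV n → QV n) (i j : Fin n) :
    inducedMul n g (stdBasis n i) (stdBasis n j)
      = g (stdBasis n i + stdBasis n j) + stdBasis n i + stdBasis n j := by
  unfold inducedMul
  rw [Finset.sum_eq_single i, Finset.sum_eq_single j]
  · simp [stdBasis]
  · intro b _ hb; simp [stdBasis, hb]
  · simp
  · intro b _ hb; simp [stdBasis, hb]
  · simp

/-- The facts about `f` that we use. -/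
structure Good (n : ℕ) (f : QV n ≃ QV n) : Prop where
  zero : f 0 = 0
  basis : ∀ i, f (stdBasis n i) = stdBasis n i
  aff : ∀ u a b, f (f.symm (a + b) + u) = f (f.symm a + u) + f (f.symm b + u) + f u

namespace Good
variable {n : ℕ} {f : QV n ≃ QV n}

theorem step (h : Good n f) (x : QV n) (i : Fin n) :
    f (x + stdBasis n i)
      = stdBasis n i + f x + inducedMul n f (stdBasis n i) (f x) := by
  have key : ∀ a : QV n, f (f.symm a + stdBasis n i)
      = stdBasis n i + a + inducedMul n f (stdBasis n i) a := by
    apply qv_induct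
    · have : f.symm 0 = 0 := by rw [Equiv.symm_apply_eq, h.zero]
      rw [this, iMul_zero_right, zero_add, h.basis]; simp
    · intro a j ih
      have hj : f.symm (stdBasis n j) = stdBasis n j := by
        rw [Equiv.symm_apply_eq, h.basis]
      rw [h.aff, ih, hj, h.basis, iMul_add_right, iMul_basis,
        add_comm (stdBasis n j) (stdBasis n i)]
      linear_combination (-stdBasis n j) * qv_two (n := n)
  have := key (f x)
  rwa [Equiv.symm_apply_apply] at this

theorem left_comm_basis (h : Good n f) (i j : Fin n) (a : QV n) :
    inducedMul n f (stdBasis n i) (inducedMul n f (stdBasis n j) a)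
      = inducedMul n f (stdBasis n j) (inducedMul n f (stdBasis n i) a) := by
  obtain ⟨x, rfl⟩ := f.surjective a
  have e : x + stdBasis n j + stdBasis n i = x + stdBasis n i + stdBasis n j := by ring
  have e2 := congrArg f e
  rw [h.step, h.step, h.step, h.step] at e2
  simp only [iMul_add_right] at e2
  rw [iMul_comm f (stdBasis n j) (stdBasis n i)] at e2
  linear_combination e2

theorem left_comm (h : Good n f) (u v a : QV n) :
    inducedMul n f u (inducedMul n f v a) = inducedMul n f v (inducedMul n f u a) := by
  revert u v
  apply qv_induct
  · intro v; simp [iMul_zero_left, iMul_zero_right]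
  · intro u i hu
    apply qv_induct
    · simp [iMul_zero_left, iMul_zero_right]
    · intro v j hv
      have h1 := hu (stdBasis n j)
      have h2 := h.left_comm_basis i j a
      simp only [iMul_add_left, iMul_add_right] at hv ⊢
      linear_combination h1 + h2 + hv

theorem assoc (h : Good n f) (u v w : QV n) :
    inducedMul n f (inducedMul n f u v) w = inducedMul n f u (inducedMul n f v w) := by
  rw [iMul_comm f _ w, h.left_comm, iMul_comm f w v]

theorem sq_basis (h : Good n f) (i : Fin n) :
    inducedMul n f (stdBasis n i) (stdBasis n i) = 0 := by
  rw [iMul_basis, qv_self, h.zero, zero_add, qv_self]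

theorem add (h : Good n f) (x u : QV n) :
    f (x + u) = f x + f u + inducedMul n f (f x) (f u) := by
  revert u
  apply qv_induct
  · simp [h.zero, iMul_zero_right]
  · intro u i hu
    rw [← add_assoc, h.step, h.step, hu]
    simp only [iMul_add_right]
    rw [h.left_comm (f x), iMul_comm f (f x) (stdBasis n i)]
    ring

/-- Triple products vanish. -/
def Triple (n : ℕ) (f : QV n ≃ QV n) : Prop :=
  ∀ i j l : Fin n,
    inducedMul n f (inducedMul n f (stdBasis n i) (stdBasis n j)) (stdBasis n l) = 0

theorem triple_all (h4 : Triple n f) (u v w : QV n) :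
    inducedMul n f (inducedMul n f u v) w = 0 := by
  revert u v w
  apply qv_induct
  · intro v w; simp [iMul_zero_left]
  intro u i hu
  apply qv_induct
  · intro w; simp [iMul_zero_left, iMul_zero_right]
  intro v j hv
  apply qv_induct
  · simp [iMul_zero_right]
  intro w l hw
  rw [iMul_add_right, hw, iMul_add_right, iMul_add_left, hv, iMul_add_left, iMul_add_left,
    h4, hu]
  simp

theorem diff_ann (h : Good n f) (h4 : Triple n f) (x w : QV n) :
    inducedMul n f (f x) w = inducedMul n f x w := by
  revert x
  apply qv_induct
  · rw [h.zero]
  · intro x i hx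
    rw [h.step, iMul_add_left, iMul_add_left, hx, triple_all h4, iMul_add_left]
    ring

/-- vector-valued multilinear coefficient -/
theorem coeff_insert (h : Good n f) (T : Finset (Fin n)) (hT : T.Nonempty) (i : Fin n)
    (hi : i ∉ T) :
    ∑ R ∈ (insert i T).powerset, f (∑ k ∈ R, stdBasis n k)
      = inducedMul n f (stdBasis n i) (∑ R ∈ T.powerset, f (∑ k ∈ R, stdBasis n k)) := by
  rw [Finset.sum_powerset_insert hi]
  have e1 : ∀ R ∈ T.powerset, f (∑ k ∈ insert i R, stdBasis n k)
      = stdBasis n i + f (∑ k ∈ R, stdBasis n k)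
        + inducedMul n f (stdBasis n i) (f (∑ k ∈ R, stdBasis n k)) := by
    intro R hR
    have : i ∉ R := fun hh => hi (Finset.mem_powerset.1 hR hh)
    rw [Finset.sum_insert this, add_comm, h.step]
  rw [Finset.sum_congr rfl e1, Finset.sum_add_distrib, Finset.sum_add_distrib]
  have e2 : ∀ (s : Finset (Finset (Fin n))) (F : Finset (Fin n) → QV n),
      inducedMul n f (stdBasis n i) (∑ R ∈ s, F R)
        = ∑ R ∈ s, inducedMul n f (stdBasis n i) (F R) := by
    intro s F
    induction s using Finset.induction_on with
    | empty => simp [iMul_zero_right]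
    | insert a s ha ih => rw [Finset.sum_insert ha, Finset.sum_insert ha, iMul_add_right, ih]
  rw [e2]
  have e3 : ∑ R ∈ T.powerset, stdBasis n i = 0 := by
    rw [Finset.sum_const, Finset.card_powerset]
    obtain ⟨k, hk⟩ := Nat.exists_eq_succ_of_ne_zero (Finset.card_pos.2 hT).ne'
    rw [hk, pow_succ, mul_nsmul, two_nsmul]
    simp [qv_self]
  rw [e3]
  linear_combination (∑ R ∈ T.powerset, f (∑ k ∈ R, stdBasis n k)) * qv_two (n := n)

theorem coeff_single (h : Good n f) (i : Fin n) :
    ∑ R ∈ ({i} : Finset (Fin n)).powerset, f (∑ k ∈ R, stdBasis n k) = stdBasis n i := by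
  rw [← insert_empty_eq, Finset.sum_powerset_insert (by simp)]
  simp [h.zero, h.basis]

theorem mlCoeff_eq (m : Fin n) (T : Finset (Fin n)) :
    mlCoeff n (fun v => f v m) T = (∑ R ∈ T.powerset, f (∑ k ∈ R, stdBasis n k)) m := by
  simp [mlCoeff, Finset.sum_apply]

theorem three_iff_four (h : Good n f) :
    (∀ (m : Fin n) (T : Finset (Fin n)), mlCoeff n (fun v => f v m) T ≠ 0 → T.card ≤ 2)
      ↔ Triple n f := by
  simp only [mlCoeff_eq]
  constructor
  · intro H i j l
    rw [h.assoc]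
    by_cases hjl : j = l
    · subst hjl; rw [h.sq_basis, iMul_zero_right]
    by_cases hij : i = j
    · subst hij; rw [← h.assoc, h.sq_basis, iMul_zero_left]
    by_cases hil : i = l
    · subst hil; rw [h.left_comm, h.sq_basis, iMul_zero_right]
    have e := h.coeff_insert (insert j {l}) (by simp) i (by simp [hij, hil])
    rw [h.coeff_insert {l} (by simp) j (by simp [hjl]), h.coeff_single] at e
    rw [← e]
    funext m
    by_contra hc
    have := H m _ hc
    rw [Finset.card_insert_of_notMem (by simp [hij, hil]),
      Finset.card_insert_of_notMem (by simp [hjl])] at this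
    simp at this
  · intro h4
    have key : ∀ k, ∀ T : Finset (Fin n), T.card = k + 3 →
        ∑ R ∈ T.powerset, f (∑ k ∈ R, stdBasis n k) = 0 := by
      intro k T hT
      obtain ⟨i, T1, hi, rfl, hT1⟩ := Finset.card_eq_succ.1 hT
      obtain ⟨j, T2, hj, rfl, hT2⟩ := Finset.card_eq_succ.1 hT1
      rw [h.coeff_insert _ (by simp) i hi,
        h.coeff_insert T2 (Finset.card_pos.1 (by omega)) j hj, ← h.assoc, triple_all h4]
    intro m T hT
    by_contra hc
    apply hT
    rw [key (T.card - 3) T (by omega)]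
    rfl

end Good

theorem staircase_fix {n : ℕ} (L : List (Fin n × Fin n × Fin n)) (v : QV n)
    (hv : ∀ i j, i < j → v i * v j = 0)
    (hL : ∀ t ∈ L, t.1 < t.2.1 ∧ t.2.1 < t.2.2) :
    L.foldl (fun w t => tofFun n t.1 t.2.1 t.2.2 w) v = v := by
  induction L with
  | nil => rfl
  | cons t L ih =>
    rw [List.foldl_cons]
    have : tofFun n t.1 t.2.1 t.2.2 v = v := by
      funext m
      simp [tofFun, hv _ _ (hL t (by simp)).1]
    rw [this]
    exact ih fun t ht => hL t (by simp [ht])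

theorem good_of {n : ℕ} (f : QV n ≃ QV n) (hst : IsStaircase n ⇑f)
    (aff : ∀ u a b, f (f.symm (a + b) + u) = f (f.symm a + u) + f (f.symm b + u) + f u) :
    Good n f := by
  obtain ⟨L, _, hL, _, hf⟩ := hst
  refine ⟨?_, ?_, aff⟩
  · rw [hf]; exact staircase_fix L 0 (by simp) hL
  · intro i
    rw [hf]
    refine staircase_fix L _ ?_ hL
    intro a b hab
    by_cases ha : a = i
    · have : b ≠ i := by rintro rfl; exact hab.ne ha
      simp [stdBasis, this]
    · simp [stdBasis, ha]

end AlgebraPart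

section MatrixPart

/-- The sign character of `𝔽₂`. -/
noncomputable def chi (a : ZMod 2) : ℂ := (-1) ^ a.val

theorem zmod2_cases (a : ZMod 2) : a = 0 ∨ a = 1 := by revert a; decide

theorem chi_zero : chi 0 = 1 := by simp [chi]

theorem chi_one : chi 1 = -1 := by
  have : (1 : ZMod 2).val = 1 := rfl
  simp [chi, this]

theorem chi_add (a b : ZMod 2) : chi (a + b) = chi a * chi b := by
  have h11 : (1 : ZMod 2) + 1 = 0 := rfl
  rcases zmod2_cases a with rfl | rfl <;> rcases zmod2_cases b with rfl | rfl <;>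
    simp [chi_zero, chi_one, h11]

theorem chi_natCast (k : ℕ) : chi (k : ZMod 2) = (-1) ^ k := by
  rw [chi, ZMod.val_natCast, ← neg_one_pow_eq_pow_mod_two]

theorem chi_inj {a b : ZMod 2} (h : chi a = chi b) : a = b := by
  rcases zmod2_cases a with rfl | rfl <;> rcases zmod2_cases b with rfl | rfl <;>
    simp [chi_zero, chi_one] at h ⊢ <;> norm_num at h

theorem chi_ne_zero (a : ZMod 2) : chi a ≠ 0 := by
  simp [chi]

theorem chi_sq (a : ZMod 2) : chi a * chi a = 1 := by
  rw [← chi_add, CharTwo.add_self_eq_zero, chi_zero]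

theorem chi_star (a : ZMod 2) : (starRingEnd ℂ) (chi a) = chi a := by
  simp [chi]

variable {n : ℕ}

theorem XZ_apply (u z a b : QV n) :
    XZGate n u z a b = if a = b + u then chi (z ⬝ᵥ b) else 0 := by
  unfold XZGate
  rw [← chi_natCast]
  simp [dotProduct]

theorem qv_eq_add_iff (a b u : QV n) : a = b + u ↔ a + u = b := by
  constructor
  · rintro rfl; rw [add_assoc, qv_self, add_zero]
  · rintro rfl; rw [add_assoc, qv_self, add_zero]

theorem XZ_mul_apply (u z a b : QV n) (M : QMat n) :
    (XZGate n u z * M) a b = chi (z ⬝ᵥ (a + u)) * M (a + u) b := by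
  rw [Matrix.mul_apply, Finset.sum_eq_single (a + u)]
  · rw [XZ_apply, if_pos]; rw [add_assoc, qv_self, add_zero]
  · intro c _ hc
    rw [XZ_apply, if_neg, zero_mul]
    rw [qv_eq_add_iff]; exact fun h => hc h.symm
  · simp

theorem mul_XZ_apply (u z a b : QV n) (M : QMat n) :
    (M * XZGate n u z) a b = M a (b + u) * chi (z ⬝ᵥ b) := by
  rw [Matrix.mul_apply, Finset.sum_eq_single (b + u)]
  · rw [XZ_apply, if_pos rfl]
  · intro c _ hc
    rw [XZ_apply, if_neg hc, mul_zero]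
  · simp

theorem perm_pos (f : QV n ≃ QV n) {a b : QV n} (h : a = f b) : permGate n f a b = 1 :=
  if_pos h

theorem perm_neg (f : QV n ≃ QV n) {a b : QV n} (h : ¬ a = f b) : permGate n f a b = 0 :=
  if_neg h

theorem perm_mul_apply (f : QV n ≃ QV n) (a b : QV n) (M : QMat n) :
    (permGate n f * M) a b = M (f.symm a) b := by
  rw [Matrix.mul_apply, Finset.sum_eq_single (f.symm a)]
  · simp [permGate]
  · intro c _ hc
    have : a ≠ f c := by rintro rfl; simp at hc
    simp [permGate, this]
  · simp

theorem mul_perm_apply (f : QV n ≃ QV n) (a b : QV n) (M : QMat n) :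
    (M * permGate n f) a b = M a (f b) := by
  rw [Matrix.mul_apply, Finset.sum_eq_single (f b)]
  · simp [permGate]
  · intro c _ hc
    simp [permGate, hc]
  · simp

theorem perm_mul (f g : QV n ≃ QV n) :
    permGate n f * permGate n g = permGate n (g.trans f) := by
  ext a b
  rw [mul_perm_apply]; rfl

theorem perm_star (f : QV n ≃ QV n) : star (permGate n f) = permGate n f.symm := by
  ext a b
  rw [Matrix.star_apply]
  simp only [permGate]
  by_cases h : a = f.symm b
  · rw [if_pos h, if_pos (by rw [h]; simp)]; simp
  · rw [if_neg h, if_neg (by rintro rfl; simp at h)]; simp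

theorem perm_refl : permGate n (Equiv.refl _) = 1 := by
  ext a b
  by_cases h : a = b
  · rw [perm_pos _ h, h, Matrix.one_apply_eq]
  · rw [perm_neg _ h, Matrix.one_apply_ne h]

theorem perm_unitary (f : QV n ≃ QV n) : permGate n f ∈ Matrix.unitaryGroup (QV n) ℂ := by
  rw [Matrix.mem_unitaryGroup_iff, perm_star, perm_mul]
  simp [perm_refl]

theorem perm_inv (f : QV n ≃ QV n) : (permGate n f)⁻¹ = permGate n f.symm := by
  apply Matrix.inv_eq_right_inv
  rw [perm_mul]; simp [perm_refl]

/-- Pauli phases. -/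
def IsPh (c : ℂ) : Prop := c = 1 ∨ c = -1 ∨ c = Complex.I ∨ c = -Complex.I

theorem IsPh.mul {c d : ℂ} (hc : IsPh c) (hd : IsPh d) : IsPh (c * d) := by
  rcases hc with rfl | rfl | rfl | rfl <;> rcases hd with rfl | rfl | rfl | rfl <;>
    simp [IsPh]

theorem IsPh.star {c : ℂ} (hc : IsPh c) : IsPh (star c) := by
  rcases hc with rfl | rfl | rfl | rfl <;> simp [IsPh]

theorem IsPh.mul_star {c : ℂ} (hc : IsPh c) : c * Star.star c = 1 := by
  rcases hc with rfl | rfl | rfl | rfl <;> simp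

theorem IsPh.ne {c : ℂ} (hc : IsPh c) : c ≠ 0 := by
  rcases hc with rfl | rfl | rfl | rfl <;> simp

theorem isPh_one : IsPh 1 := Or.inl rfl

theorem isPh_chi (a : ZMod 2) : IsPh (chi a) := by
  rcases zmod2_cases a with rfl | rfl
  · left; exact chi_zero
  · right; left; exact chi_one

theorem XZ_mul (u z u' z' : QV n) :
    XZGate n u z * XZGate n u' z' = chi (z ⬝ᵥ u') • XZGate n (u + u') (z + z') := by
  ext a b
  rw [mul_XZ_apply, Matrix.smul_apply, XZ_apply, XZ_apply, smul_eq_mul]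
  have e : b + u' + u = b + (u + u') := by ring
  rw [e]
  split_ifs
  · rw [dotProduct_add, add_dotProduct, chi_add, chi_add]; ring
  · simp

theorem XZ_zero : XZGate n 0 0 = 1 := by
  ext a b
  rw [XZ_apply]
  simp [Matrix.one_apply, chi_zero]

theorem XZ_star (u z : QV n) : star (XZGate n u z) = chi (z ⬝ᵥ u) • XZGate n u z := by
  ext a b
  rw [Matrix.star_apply, Matrix.smul_apply, XZ_apply, XZ_apply, smul_eq_mul]
  by_cases h : a = b + u
  · subst h
    rw [if_pos (by rw [add_assoc, qv_self, add_zero]), if_pos rfl, dotProduct_add, chi_add]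
    simp only [star_mul', RCLike.star_def, chi_star]; ring
  · rw [if_neg h, if_neg]
    · simp
    · rw [qv_eq_add_iff]; exact fun hh => h hh.symm

theorem pauli_mem {c : ℂ} (hc : IsPh c) (u z : QV n) : c • XZGate n u z ∈ PauliGroup n :=
  ⟨c, u, z, hc, rfl⟩

theorem XZ_mem (u z : QV n) : XZGate n u z ∈ PauliGroup n :=
  ⟨1, u, z, isPh_one, by simp⟩

theorem pauli_smul {c : ℂ} (hc : IsPh c) {P : QMat n} (hP : P ∈ PauliGroup n) :
    c • P ∈ PauliGroup n := by
  obtain ⟨d, u, z, hd, rfl⟩ := hP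
  rw [smul_smul]; exact pauli_mem (hc.mul hd) u z

theorem pauli_mul {P Q : QMat n} (hP : P ∈ PauliGroup n) (hQ : Q ∈ PauliGroup n) :
    P * Q ∈ PauliGroup n := by
  obtain ⟨d, u, z, hd, rfl⟩ := hP
  obtain ⟨d', u', z', hd', rfl⟩ := hQ
  rw [Matrix.smul_mul, Matrix.mul_smul, XZ_mul]
  exact pauli_smul hd (pauli_smul hd' (pauli_mem (isPh_chi _) _ _))

theorem XZ_unitary (u z : QV n) : XZGate n u z ∈ Matrix.unitaryGroup (QV n) ℂ := by
  rw [Matrix.mem_unitaryGroup_iff, XZ_star, Matrix.mul_smul, XZ_mul, smul_smul, chi_sq,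
    qv_self, qv_self, XZ_zero, one_smul]

theorem pauli_map_star {P : QMat n} (hP : P ∈ PauliGroup n) :
    P.map star ∈ PauliGroup n := by
  obtain ⟨d, u, z, hd, rfl⟩ := hP
  refine ⟨star d, u, z, IsPh.star hd, ?_⟩
  ext a b
  simp only [Matrix.map_apply, Matrix.smul_apply, XZ_apply, smul_eq_mul, star_mul']
  split_ifs
  · simp [chi_star]
  · simp

theorem pauli_finite : (PauliGroup n).Finite := by
  have : PauliGroup n ⊆ (fun t : ℂ × QV n × QV n => t.1 • XZGate n t.2.1 t.2.2) ''
      (({1, -1, Complex.I, -Complex.I} : Set ℂ) ×ˢ Set.univ) := by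
    rintro P ⟨c, u, z, hc, rfl⟩
    refine ⟨(c, u, z), ⟨?_, trivial⟩, rfl⟩
    simpa using hc
  refine Set.Finite.subset (Set.Finite.image _ ?_) this
  exact Set.Finite.prod (by simp) Set.finite_univ

theorem c2_iff {U : QMat n} : U ∈ CliffordLevel n 2 ↔
    U ∈ Matrix.unitaryGroup (QV n) ℂ ∧ ∀ P ∈ PauliGroup n, U * P * star U ∈ PauliGroup n :=
  Iff.rfl

theorem c3_iff {U : QMat n} : U ∈ CliffordLevel n 3 ↔
    U ∈ Matrix.unitaryGroup (QV n) ℂ ∧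
      ∀ P ∈ PauliGroup n, U * P * star U ∈ CliffordLevel n 2 :=
  Iff.rfl

theorem un_l {U : QMat n} (h : U ∈ Matrix.unitaryGroup (QV n) ℂ) : star U * U = 1 :=
  Matrix.mem_unitaryGroup_iff'.1 h

theorem un_r {U : QMat n} (h : U ∈ Matrix.unitaryGroup (QV n) ℂ) : U * star U = 1 :=
  Matrix.mem_unitaryGroup_iff.1 h

theorem un_star {U : QMat n} (h : U ∈ Matrix.unitaryGroup (QV n) ℂ) :
    star U ∈ Matrix.unitaryGroup (QV n) ℂ := Unitary.star_mem h

theorem c2_mul {U V : QMat n} (hU : U ∈ CliffordLevel n 2) (hV : V ∈ CliffordLevel n 2) :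
    U * V ∈ CliffordLevel n 2 := by
  rw [c2_iff] at *
  refine ⟨mul_mem hU.1 hV.1, fun P hP => ?_⟩
  have := hU.2 _ (hV.2 P hP)
  rw [star_mul]
  simpa only [mul_assoc] using this

theorem c2_star {U : QMat n} (hU : U ∈ CliffordLevel n 2) : star U ∈ CliffordLevel n 2 := by
  rw [c2_iff] at *
  refine ⟨un_star hU.1, fun P hP => ?_⟩
  have inj : Function.Injective (fun Q : QMat n => U * Q * star U) := by
    intro A B h
    have h' : star U * (U * A * star U) * U = star U * (U * B * star U) * U :=
      congrArg (fun X => star U * X * U) h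
    have e : ∀ A : QMat n, star U * (U * A * star U) * U = A := by
      intro A
      calc star U * (U * A * star U) * U = (star U * U) * A * (star U * U) := by
            simp only [mul_assoc]
        _ = A := by rw [un_l hU.1]; simp
    rwa [e, e] at h'
  have hs : Set.SurjOn (fun Q : QMat n => U * Q * star U) (PauliGroup n) (PauliGroup n) :=
    ((Set.Finite.injOn_iff_bijOn_of_mapsTo pauli_finite (fun Q hQ => hU.2 Q hQ)).1
      inj.injOn).surjOn
  obtain ⟨Q, hQ, rfl⟩ := hs hP
  have : star U * (U * Q * star U) * star (star U) = Q := by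
    rw [star_star]
    calc star U * (U * Q * star U) * U = (star U * U) * Q * (star U * U) := by
            simp only [mul_assoc]
        _ = Q := by rw [un_l hU.1]; simp
  rw [this]; exact hQ

theorem c2_of {U : QMat n} (hU : U ∈ Matrix.unitaryGroup (QV n) ℂ)
    (h : ∀ u z, ∃ c u' z', IsPh c ∧ U * XZGate n u z = c • (XZGate n u' z' * U)) :
    U ∈ CliffordLevel n 2 := by
  rw [c2_iff]
  refine ⟨hU, ?_⟩
  rintro P ⟨d, u, z, hd, rfl⟩
  obtain ⟨c, u', z', hc, e⟩ := h u z
  have hd : IsPh d := hd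
  rw [Matrix.mul_smul, e, Matrix.smul_mul, Matrix.smul_mul, mul_assoc, un_r hU, mul_one]
  exact pauli_smul hd (pauli_mem hc _ _)

theorem c2_smul {c : ℂ} (hc : IsPh c) {U : QMat n} (hU : U ∈ CliffordLevel n 2) :
    c • U ∈ CliffordLevel n 2 := by
  rw [c2_iff] at *
  have hcs := hc.mul_star
  refine ⟨?_, fun P hP => ?_⟩
  · rw [Matrix.mem_unitaryGroup_iff, star_smul, Matrix.smul_mul, Matrix.mul_smul, smul_smul,
      un_r hU.1, hcs, one_smul]
  · rw [star_smul, Matrix.smul_mul, Matrix.smul_mul, Matrix.mul_smul, smul_smul,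
      hcs, one_smul]
    exact hU.2 P hP

theorem map_star_mul (A B : QMat n) : (A * B).map star = A.map star * B.map star := by
  ext a b
  simp [Matrix.mul_apply]

theorem map_star_map_star (A : QMat n) : (A.map star).map star = A := by
  ext a b
  simp

theorem star_map_star (A : QMat n) : (star A).map star = star (A.map star) := by
  ext a b
  simp [Matrix.star_apply]

theorem unitary_map_star {U : QMat n} (hU : U ∈ Matrix.unitaryGroup (QV n) ℂ) :
    U.map star ∈ Matrix.unitaryGroup (QV n) ℂ := by
  rw [Matrix.mem_unitaryGroup_iff, ← star_map_star, ← map_star_mul, un_r hU]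
  ext a b
  by_cases h : a = b <;> simp [Matrix.one_apply, h]

theorem c2_map_star {U : QMat n} (hU : U ∈ CliffordLevel n 2) :
    U.map star ∈ CliffordLevel n 2 := by
  rw [c2_iff] at *
  refine ⟨unitary_map_star hU.1, fun P hP => ?_⟩
  have := pauli_map_star (hU.2 _ (pauli_map_star hP))
  rwa [map_star_mul, map_star_mul, map_star_map_star, star_map_star] at this

theorem c3_map_star {U : QMat n} (hU : U ∈ CliffordLevel n 3) :
    U.map star ∈ CliffordLevel n 3 := by
  rw [c3_iff] at *
  refine ⟨unitary_map_star hU.1, fun P hP => ?_⟩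
  have := c2_map_star (hU.2 _ (pauli_map_star hP))
  rwa [map_star_mul, map_star_mul, map_star_map_star, star_map_star] at this

theorem c3_mul_left {U V : QMat n} (hU : U ∈ CliffordLevel n 2) (hV : V ∈ CliffordLevel n 3) :
    U * V ∈ CliffordLevel n 3 := by
  rw [c3_iff] at *
  refine ⟨mul_mem (c2_iff.1 hU).1 hV.1, fun P hP => ?_⟩
  have := c2_mul (c2_mul hU (hV.2 P hP)) (c2_star hU)
  rw [star_mul]
  simpa only [mul_assoc] using this

theorem c3_mul_right {U V : QMat n} (hU : U ∈ CliffordLevel n 3)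
    (hV : V ∈ CliffordLevel n 2) : U * V ∈ CliffordLevel n 3 := by
  rw [c3_iff] at *
  rw [c2_iff] at hV
  refine ⟨mul_mem hU.1 hV.1, fun P hP => ?_⟩
  have := hU.2 _ (hV.2 P hP)
  rw [star_mul]
  simpa only [mul_assoc] using this

/-- (1) implies (2), for arbitrary third-level gates. -/
theorem semi_inv {U : QMat n} (hU : U ∈ CliffordLevel n 3) (hs : IsSemiClifford n U) :
    star U ∈ CliffordLevel n 3 := by
  obtain ⟨p, d, q, hp, hq, hd, e⟩ := hs
  have hd3 : d ∈ CliffordLevel n 3 := by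
    have e2 : d = star p * U * star q := by
      rw [e]
      calc d = (star p * p) * d * (q * star q) := by
            rw [un_l (c2_iff.1 hp).1, un_r (c2_iff.1 hq).1]; simp
        _ = _ := by simp only [mul_assoc]
    rw [e2]
    exact c3_mul_right (c3_mul_left (c2_star hp) hU) (c2_star hq)
  have hds : star d = d.map star := by
    ext a b
    rw [Matrix.star_apply, Matrix.map_apply]
    by_cases h : a = b
    · rw [h]
    · rw [hd a b h, hd b a (Ne.symm h)]
  rw [e, star_mul, star_mul, hds, ← mul_assoc]
  exact c3_mul_right (c3_mul_left (c2_star hq) (c3_map_star hd3)) (c2_star hp)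

/-- Affine functions. -/
def Aff (h : QV n → ZMod 2) : Prop := ∀ x y, h (x + y) = h x + h y + h 0

theorem dot_basis (z : QV n) (i : Fin n) : z ⬝ᵥ stdBasis n i = z i := by
  simp [dotProduct, stdBasis]

theorem basis_dot (z : QV n) (i : Fin n) : stdBasis n i ⬝ᵥ z = z i := by
  simp [dotProduct, stdBasis]

theorem Aff.exists {h : QV n → ZMod 2} (hh : Aff h) : ∃ z : QV n, ∀ x, h x = z ⬝ᵥ x + h 0 := by
  refine ⟨fun i => h (stdBasis n i) + h 0, ?_⟩
  apply qv_induct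
  · simp
  · intro x i hx
    rw [hh, hx, dotProduct_add, dot_basis]
    ring

theorem monomial_c2 (g : QV n ≃ QV n) (q : QV n → ZMod 2)
    (hg : ∀ x y, g (x + y) = g x + g y + g 0)
    (hq : ∀ u, Aff fun b => q (b + u) + q b) :
    permGate n g * Matrix.diagonal (fun b => chi (q b)) ∈ CliffordLevel n 2 := by
  apply c2_of
  · refine mul_mem (perm_unitary g) ?_
    rw [Matrix.mem_unitaryGroup_iff, Matrix.star_eq_conjTranspose,
      Matrix.diagonal_conjTranspose, Matrix.diagonal_mul_diagonal, ← Matrix.diagonal_one]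
    congr 1
    funext b
    simp [chi_star, chi_sq]
  · intro u z
    have hA : Aff fun y => q (g.symm y + u) + q (g.symm y) + z ⬝ᵥ g.symm y := by
      have hgs : ∀ x y, g.symm (x + y) = g.symm x + g.symm y + g.symm 0 := by
        intro x y
        rw [Equiv.symm_apply_eq, hg, hg]
        simp only [Equiv.apply_symm_apply]
        linear_combination (-g 0) * qv_two (n := n)
      intro x y
      have t1 := hq u (g.symm x + g.symm y) (g.symm 0)
      have t2 := hq u (g.symm x) (g.symm y)
      simp only at t1 t2 ⊢
      rw [hgs, t1, t2, dotProduct_add, dotProduct_add]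
      have h2 : (2 : ZMod 2) = 0 := rfl
      linear_combination (q (0 + u) + q 0) * h2
    obtain ⟨z', hz'⟩ := hA.exists
    refine ⟨chi (q (g.symm 0 + u) + q (g.symm 0) + z ⬝ᵥ g.symm 0), g u + g 0, z',
      isPh_chi _, ?_⟩
    ext a b
    rw [mul_XZ_apply, Matrix.smul_apply, XZ_mul_apply, perm_mul_apply, perm_mul_apply,
      Matrix.diagonal_apply, Matrix.diagonal_apply, smul_eq_mul]
    by_cases h : a = g b + (g u + g 0)
    · have e1 : a + (g u + g 0) = g b := by rw [← qv_eq_add_iff]; exact h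
      have e2 : a = g (b + u) := by rw [h, hg]; ring
      rw [e1, e2]
      simp only [Equiv.symm_apply_apply, if_true]
      have := hz' (g b)
      simp only [Equiv.symm_apply_apply] at this
      rw [← chi_add, ← chi_add, ← chi_add]
      congr 1
      have h2 : (2 : ZMod 2) = 0 := rfl
      linear_combination this - q b * h2
    · have e1 : g.symm (a + (g u + g 0)) ≠ b := by
        rw [Ne, Equiv.symm_apply_eq, ← qv_eq_add_iff]; exact h
      have e2 : g.symm a ≠ b + u := by
        rw [Ne, Equiv.symm_apply_eq, hg, add_assoc]; exact h
      rw [if_neg e1, if_neg e2]; simp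

theorem affine_c2 (g : QV n ≃ QV n) (hg : ∀ x y, g (x + y) = g x + g y + g 0) :
    permGate n g ∈ CliffordLevel n 2 := by
  have := monomial_c2 g (fun _ => 0) hg (by intro u x y; simp)
  simpa [chi_zero] using this

theorem c2_affine (g : QV n ≃ QV n) (h : permGate n g ∈ CliffordLevel n 2) (x y : QV n) :
    g (x + y) = g x + g y + g 0 := by
  obtain ⟨c, u', z', hc, e⟩ := (c2_iff.1 h).2 _ (XZ_mem y 0)
  have key : ∀ b, g (b + y) = g b + u' := by
    intro b
    have e1 := congrFun (congrFun e (g (b + y))) (g b)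
    rw [perm_star, mul_perm_apply, perm_mul_apply, Matrix.smul_apply, XZ_apply, XZ_apply] at e1
    by_contra hne
    rw [if_neg hne] at e1
    simp [chi_zero] at e1
  have k0 := key 0
  rw [zero_add] at k0
  rw [key, k0]
  linear_combination (-g 0) * qv_two (n := n)

theorem conj_shift (f : QV n ≃ QV n) (u : QV n) :
    permGate n f * XZGate n u 0 * star (permGate n f)
      = permGate n ((f.symm.trans (Equiv.addRight u)).trans f) := by
  ext a b
  rw [perm_star, mul_perm_apply, perm_mul_apply, XZ_apply, zero_dotProduct, chi_zero]
  by_cases h : a = f (f.symm b + u)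
  · rw [perm_pos ((f.symm.trans (Equiv.addRight u)).trans f) h, if_pos (by rw [h]; simp)]
  · rw [perm_neg ((f.symm.trans (Equiv.addRight u)).trans f) h, if_neg (by rwa [Equiv.symm_apply_eq])]

theorem aff_of_c3 (f : QV n ≃ QV n) (hf : permGate n f ∈ CliffordLevel n 3) (u a b : QV n) 
    (h0 : f 0 = 0) :
    f (f.symm (a + b) + u) = f (f.symm a + u) + f (f.symm b + u) + f u := by
  have h1 := (c3_iff.1 hf).2 _ (XZ_mem u 0)
  rw [conj_shift] at h1
  have h2 := c2_affine _ h1 a b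
  have : f.symm 0 = 0 := by rw [Equiv.symm_apply_eq, h0]
  simpa [this] using h2

/-- (2) implies (4). -/
theorem two_four (f : QV n ≃ QV n) (h : Good n f)
    (h3 : permGate n f.symm ∈ CliffordLevel n 3) : Good.Triple n f := by
  have key : ∀ (z u : QV n), Aff fun b => z ⬝ᵥ (f (b + u) + f b) := by
    intro z u
    obtain ⟨c, u', z', hc, e⟩ := (c2_iff.1 ((c3_iff.1 h3).2 _ (XZ_mem 0 z))).2 _ (XZ_mem u 0)
    have hc : IsPh c := hc
    have hD : permGate n f.symm * XZGate n 0 z * star (permGate n f.symm)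
        = Matrix.diagonal fun b => chi (z ⬝ᵥ f b) := by
      ext a b
      rw [perm_star, mul_perm_apply, perm_mul_apply, XZ_apply, Matrix.diagonal_apply]
      simp only [Equiv.symm_symm, add_zero, EmbeddingLike.apply_eq_iff_eq]
      by_cases hab : a = b
      · simp [hab]
      · simp [hab]
    have e1 : ∀ b, chi (z ⬝ᵥ (f (b + u) + f b)) = c * chi (z' ⬝ᵥ b) := by
      intro b
      have e2 := congrFun (congrFun e (b + u)) b
      rw [hD, Matrix.star_eq_conjTranspose, Matrix.diagonal_conjTranspose,
        Matrix.mul_diagonal, Matrix.diagonal_mul, XZ_apply, if_pos rfl, zero_dotProduct,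
        chi_zero, Matrix.smul_apply, XZ_apply, smul_eq_mul] at e2
      have e3 : (star fun b => chi (z ⬝ᵥ f b)) b = chi (z ⬝ᵥ f b) := by
        simp [chi_star]
      rw [e3, mul_one, ← chi_add, ← dotProduct_add] at e2
      by_cases hu : b + u = b + u'
      · rw [if_pos hu] at e2; exact e2
      · rw [if_neg hu, mul_zero] at e2
        exact absurd e2 (chi_ne_zero _)
    have hc0 := e1 0
    rw [dotProduct_zero, chi_zero, mul_one] at hc0
    have e4 : ∀ b, z ⬝ᵥ (f (b + u) + f b) = z ⬝ᵥ (f (0 + u) + f 0) + z' ⬝ᵥ b := by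
      intro b
      apply chi_inj
      rw [e1, chi_add, ← hc0]
    intro x y
    simp only
    rw [e4 (x + y), e4 x, e4 y, dotProduct_add z' x y]
    have h2 : (2 : ZMod 2) = 0 := rfl
    generalize z ⬝ᵥ (f (0 + u) + f 0) = t
    linear_combination (-t) * h2
  intro i j l
  rw [h.assoc]
  funext m
  have k := key (stdBasis n m) (stdBasis n i) (stdBasis n j) (stdBasis n l)
  simp only [h.step] at k
  simp only [basis_dot, h.basis, h.zero, iMul_add_right, Pi.add_apply,
    iMul_zero_right, Pi.zero_apply, add_zero] at k ⊢
  have h2 : (2 : ZMod 2) = 0 := rfl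
  rw [iMul_comm f (stdBasis n j) (stdBasis n l)]
  linear_combination k + (stdBasis n i m
    - inducedMul n f (stdBasis n l) (stdBasis n j) m) * h2

end MatrixPart

section FinalPart

variable {n : ℕ}

/-- (4) implies (2). -/
theorem four_two (f : QV n ≃ QV n) (h : Good n f) (h4 : Good.Triple n f) :
    permGate n f.symm ∈ CliffordLevel n 3 := by
  rw [c3_iff]
  refine ⟨perm_unitary _, ?_⟩
  rintro P ⟨c, u, z, hc, rfl⟩
  rw [Matrix.mul_smul, Matrix.smul_mul]
  refine c2_smul hc ?_
  have hD : permGate n f.symm * XZGate n u z * star (permGate n f.symm)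
      = permGate n ((f.trans (Equiv.addRight u)).trans f.symm)
        * Matrix.diagonal fun b => chi (z ⬝ᵥ f b) := by
    ext a b
    rw [perm_star, mul_perm_apply, perm_mul_apply, XZ_apply, Matrix.mul_diagonal]
    simp only [Equiv.symm_symm]
    by_cases hab : f a = f b + u
    · have h' : a = f.symm (f b + u) := by rw [← hab]; simp
      rw [if_pos hab, perm_pos ((f.trans (Equiv.addRight u)).trans f.symm) h', one_mul]
    · have h' : ¬ a = f.symm (f b + u) := by
        intro e; apply hab; rw [e]; simp
      rw [if_neg hab, perm_neg ((f.trans (Equiv.addRight u)).trans f.symm) h', zero_mul]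
  rw [hD]
  apply monomial_c2
  · have hg : ∀ x, f.symm (f x + u) = x + f.symm u + f.symm (inducedMul n f x u) := by
      intro x
      rw [Equiv.symm_apply_eq, h.add, h.add]
      simp only [Equiv.apply_symm_apply]
      rw [h.diff_ann h4, iMul_comm f _ (inducedMul n f x u), Good.triple_all h4]
      linear_combination (-inducedMul n f x u) * qv_two (n := n)
    have h0 : f.symm 0 = 0 := by rw [Equiv.symm_apply_eq, h.zero]
    intro x y
    simp only [Equiv.trans_apply, Equiv.coe_addRight, hg]
    have : f.symm (inducedMul n f (x + y) u)
        = f.symm (inducedMul n f x u) + f.symm (inducedMul n f y u) := by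
      rw [Equiv.symm_apply_eq, h.add]
      simp only [Equiv.apply_symm_apply]
      rw [Good.triple_all h4, iMul_add_left, add_zero]
    rw [this, iMul_zero_left, h0]
    linear_combination (-f.symm u) * qv_two (n := n)
  · intro v x y
    have e : ∀ b, z ⬝ᵥ f (b + v) + z ⬝ᵥ f b = z ⬝ᵥ f v + z ⬝ᵥ inducedMul n f b (f v) := by
      intro b
      rw [h.add, h.diff_ann h4, dotProduct_add, dotProduct_add]
      have h2 : (2 : ZMod 2) = 0 := rfl
      linear_combination (z ⬝ᵥ f b) * h2
    simp only [e]
    rw [iMul_add_left, dotProduct_add, iMul_zero_left, dotProduct_zero]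
    have h2 : (2 : ZMod 2) = 0 := rfl
    linear_combination (-(z ⬝ᵥ f v)) * h2

/-- Hadamard gate on qubit `i`. -/
noncomputable def Had (n : ℕ) (i : Fin n) : QMat n :=
  ((Real.sqrt 2 : ℝ) : ℂ)⁻¹ • (XZGate n (stdBasis n i) 0 + XZGate n 0 (stdBasis n i))

theorem had_eq (i : Fin n) (u z : QV n) (huz : u i = z i) :
    Had n i * XZGate n u z = chi (u i) • (XZGate n u z * Had n i) := by
  unfold Had
  rw [Matrix.smul_mul, Matrix.mul_smul, smul_comm, add_mul, mul_add, XZ_mul, XZ_mul, XZ_mul,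
    XZ_mul, smul_add (chi (u i)), smul_smul (chi (u i)), smul_smul (chi (u i))]
  simp only [zero_dotProduct, dotProduct_zero, chi_zero, one_smul, dot_basis, basis_dot,
    zero_add, add_zero, mul_one, ← huz, chi_sq]
  rw [add_comm u, add_comm z]

theorem had_ne (i : Fin n) (u z : QV n) (huz : u i = z i + 1) :
    Had n i * XZGate n u z
      = XZGate n (u + stdBasis n i) (z + stdBasis n i) * Had n i := by
  unfold Had
  rw [Matrix.smul_mul, Matrix.mul_smul, add_mul, mul_add, XZ_mul, XZ_mul, XZ_mul,
    XZ_mul]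
  have e : (z + stdBasis n i) i = u i := by rw [huz]; simp [stdBasis]
  simp only [zero_dotProduct, dotProduct_zero, chi_zero, one_smul, dot_basis, basis_dot,
    zero_add, add_zero, e]
  rw [add_assoc u, add_assoc z, qv_self, add_zero, add_zero, add_comm u, add_comm z, add_comm]

theorem had_c2 (i : Fin n) : Had n i ∈ CliffordLevel n 2 := by
  apply c2_of
  · have hs : star (Had n i) = Had n i := by
      unfold Had
      rw [star_smul, star_add, XZ_star, XZ_star]
      simp [chi_zero]
    rw [Matrix.mem_unitaryGroup_iff, hs]
    unfold Had
    rw [Matrix.smul_mul, Matrix.mul_smul, smul_smul, add_mul, mul_add, mul_add, XZ_mul,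
      XZ_mul, XZ_mul, XZ_mul]
    simp only [zero_dotProduct, dotProduct_zero, chi_zero, one_smul, basis_dot,
      zero_add, add_zero, qv_self, XZ_zero]
    have e : stdBasis n i i = 1 := by simp [stdBasis]
    rw [e, chi_one, ← mul_inv, ← Complex.ofReal_mul, Real.mul_self_sqrt (by norm_num)]
    ext a b
    simp only [Matrix.smul_apply, Matrix.add_apply, smul_eq_mul]
    push_cast
    ring
  · intro u z
    by_cases huz : u i = z i
    · exact ⟨_, _, _, isPh_chi _, had_eq i u z huz⟩
    · refine ⟨1, u + stdBasis n i, z + stdBasis n i, isPh_one, ?_⟩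
      rw [one_smul]
      apply had_ne
      revert huz
      generalize u i = s
      generalize z i = t
      revert s t
      decide

theorem exists_hads (S : Finset (Fin n)) : ∃ p ∈ CliffordLevel n 2, ∀ i,
    (i ∈ S → p * XZGate n 0 (stdBasis n i) = XZGate n (stdBasis n i) 0 * p) ∧
    (i ∉ S → p * XZGate n 0 (stdBasis n i) = XZGate n 0 (stdBasis n i) * p ∧
      p * XZGate n (stdBasis n i) 0 = XZGate n (stdBasis n i) 0 * p) := by
  induction S using Finset.induction_on with
  | empty =>
    refine ⟨1, ?_, by simp⟩
    have := affine_c2 (n := n) (Equiv.refl _) (by simp)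
    rwa [perm_refl] at this
  | insert j S hj ih =>
    obtain ⟨p, hp, H⟩ := ih
    have comm : ∀ i, i ≠ j → Had n j * XZGate n 0 (stdBasis n i)
          = XZGate n 0 (stdBasis n i) * Had n j ∧
        Had n j * XZGate n (stdBasis n i) 0 = XZGate n (stdBasis n i) 0 * Had n j := by
      intro i hij
      have e : stdBasis n i j = 0 := by simp [stdBasis, hij.symm]
      constructor
      · rw [had_eq j _ _ (by simp [e])]; simp [chi_zero]
      · rw [had_eq j _ _ (by simp [e])]; simp [chi_zero, e]
    refine ⟨p * Had n j, c2_mul hp (had_c2 j), fun i => ⟨fun hi => ?_, fun hi => ?_⟩⟩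
    · by_cases hij : i = j
      · subst hij
        have e : stdBasis n i i = 1 := by simp [stdBasis]
        have h11 : (0 : ZMod 2) = 1 + 1 := rfl
        rw [mul_assoc, had_ne i _ _ (by rw [e]; exact h11), qv_self, zero_add, ← mul_assoc,
          ((H i).2 hj).2, mul_assoc]
      · have hi' : i ∈ S := (Finset.mem_insert.1 hi).resolve_left hij
        rw [mul_assoc, (comm i hij).1, ← mul_assoc, (H i).1 hi', mul_assoc]
    · rw [Finset.mem_insert, not_or] at hi
      constructor
      · rw [mul_assoc, (comm i hi.1).1, ← mul_assoc, ((H i).2 hi.2).1, mul_assoc]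
      · rw [mul_assoc, (comm i hi.1).2, ← mul_assoc, ((H i).2 hi.2).2, mul_assoc]

theorem exists_adapted (W : Submodule (ZMod 2) (QV n)) :
    ∃ (B : QV n ≃ₗ[ZMod 2] QV n) (S : Finset (Fin n)),
      (∀ i ∈ S, B (stdBasis n i) ∈ W) ∧ ∀ w ∈ W, ∀ i, i ∉ S → B.symm w i = 0 := by
  obtain ⟨V, hV⟩ := Submodule.exists_isCompl W
  let bW := Module.finBasis (ZMod 2) W
  let bV := Module.finBasis (ZMod 2) V
  let b := (bW.prod bV).map (Submodule.prodEquivOfIsCompl W V hV)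
  let σ := b.indexEquiv (Pi.basisFun (ZMod 2) (Fin n))
  let b' := b.reindex σ
  refine ⟨b'.equivFun.symm, Finset.univ.filter fun i => (σ.symm i).isLeft, ?_, ?_⟩
  · intro i hi
    rw [Finset.mem_filter] at hi
    have e : b'.equivFun.symm (stdBasis n i) = b' i := by
      rw [LinearEquiv.symm_apply_eq]
      funext k
      simp [stdBasis, eq_comm]
    rw [e]
    obtain ⟨k, hk⟩ := Sum.isLeft_iff.1 hi.2
    simp [b', b, hk]
  · intro w hw i hi
    have hr : (σ.symm i).isRight := by
      simpa using hi
    obtain ⟨k, hk⟩ := Sum.isRight_iff.1 hr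
    have e : (Submodule.prodEquivOfIsCompl W V hV).symm w = (⟨w, hw⟩, 0) := by
      rw [LinearEquiv.symm_apply_eq]; simp
    simp only [LinearEquiv.symm_symm, Module.Basis.equivFun_apply]
    simp [b', b, hk, e]

theorem diag_of_comm (d : QMat n)
    (h : ∀ i, d * XZGate n 0 (stdBasis n i) = XZGate n 0 (stdBasis n i) * d) :
    IsDiagonal n d := by
  intro a b hab
  obtain ⟨i, hi⟩ := Function.ne_iff.1 hab
  have e := congrFun (congrFun (h i) a) b
  rw [mul_XZ_apply, XZ_mul_apply, add_zero, add_zero, basis_dot, basis_dot, mul_comm] at e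
  by_contra hd
  exact hi (chi_inj (mul_right_cancel₀ hd e)).symm

theorem semi_of (f : QV n ≃ QV n) (W : Submodule (ZMod 2) (QV n))
    (L : QV n ≃ₗ[ZMod 2] QV n) (h1 : ∀ w ∈ W, ∀ x, f (x + w) = f x + L w)
    (h2 : ∀ x, L.symm (f x) + x ∈ W) : IsSemiClifford n (permGate n f) := by
  obtain ⟨B, S, hB1, hB2⟩ := exists_adapted W
  obtain ⟨p, hp, H⟩ := exists_hads S
  let A : QV n ≃ QV n := (B.trans L).toEquiv
  let g : QV n ≃ QV n := (B.toEquiv.trans f).trans A.symm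
  have hgdef : ∀ y, g y = B.symm (L.symm (f (B y))) := fun y => rfl
  have hg1 : ∀ i ∈ S, ∀ y, g (y + stdBasis n i) = g y + stdBasis n i := by
    intro i hi y
    rw [hgdef, hgdef, map_add, h1 _ (hB1 i hi)]
    simp
  have hg2 : ∀ i, i ∉ S → ∀ y, g y i = y i := by
    intro i hi y
    have e := hB2 _ (h2 (B y)) i hi
    rw [map_add, LinearEquiv.symm_apply_apply, ← hgdef, Pi.add_apply] at e
    exact CharTwo.add_eq_zero.1 e
  have hX : ∀ i ∈ S, permGate n g * XZGate n (stdBasis n i) 0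
      = XZGate n (stdBasis n i) 0 * permGate n g := by
    intro i hi
    ext a b
    rw [mul_XZ_apply, XZ_mul_apply]
    simp only [permGate, hg1 i hi, zero_dotProduct, chi_zero, one_mul, mul_one, qv_eq_add_iff]
  have hZ : ∀ i, i ∉ S → permGate n g * XZGate n 0 (stdBasis n i)
      = XZGate n 0 (stdBasis n i) * permGate n g := by
    intro i hi
    ext a b
    rw [mul_XZ_apply, XZ_mul_apply, add_zero, add_zero, basis_dot, basis_dot]
    simp only [permGate]
    by_cases hab : a = g b
    · rw [if_pos hab, hab, hg2 i hi]; ring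
    · rw [if_neg hab]; simp
  have pu := (c2_iff.1 hp).1
  refine ⟨permGate n A * p, star p * permGate n g * p, star p * permGate n B.symm.toEquiv,
    c2_mul (affine_c2 _ ?_) hp, c2_mul (c2_star hp) (affine_c2 _ ?_), diag_of_comm _ ?_, ?_⟩
  · intro x y
    change (B.trans L) (x + y) = (B.trans L) x + (B.trans L) y + (B.trans L) 0
    rw [map_add, map_zero, add_zero]
  · intro x y
    change B.symm (x + y) = B.symm x + B.symm y + B.symm 0
    rw [map_add, map_zero, add_zero]
  · intro i
    have flip : ∀ Q Z : QMat n, p * Z = Q * p → star p * Q = Z * star p := by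
      intro Q Z e
      calc star p * Q = star p * (Q * p) * star p := by
            rw [mul_assoc, mul_assoc, un_r pu, mul_one]
        _ = (star p * p) * Z * star p := by rw [← e]; simp only [mul_assoc]
        _ = Z * star p := by rw [un_l pu, one_mul]
    have main : ∀ Q Z : QMat n, p * Z = Q * p → permGate n g * Q = Q * permGate n g →
        star p * permGate n g * p * Z = Z * (star p * permGate n g * p) := by
      intro Q Z e e2
      rw [mul_assoc _ p, e, ← mul_assoc, mul_assoc _ _ Q, e2, ← mul_assoc, flip Q Z e]
      simp only [mul_assoc]
    by_cases hi : i ∈ S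
    · exact main _ _ ((H i).1 hi) (hX i hi)
    · exact main _ _ ((H i).2 hi).1 (hZ i hi)
  · calc permGate n f = permGate n A * permGate n g * permGate n B.symm.toEquiv := by
          rw [perm_mul, perm_mul]
          congr 1
          ext1 x
          change f x = A (A.symm (f (B (B.symm x))))
          simp
      _ = permGate n A * (p * star p) * permGate n g * (p * star p)
            * permGate n B.symm.toEquiv := by rw [un_r pu]; simp
      _ = _ := by simp only [mul_assoc]

/-- (4) implies (1). -/
theorem four_one (f : QV n ≃ QV n) (h : Good n f) (h4 : Good.Triple n f) :
    IsSemiClifford n (permGate n f) := by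
  let W : Submodule (ZMod 2) (QV n) :=
    { carrier := {w | ∀ x, inducedMul n f w x = 0}
      add_mem' := by
        intro a b ha hb x
        rw [iMul_add_left, ha x, hb x, add_zero]
      zero_mem' := fun x => iMul_zero_left _ _
      smul_mem' := by
        intro c a ha x
        rcases zmod2_cases c with rfl | rfl
        · rw [zero_smul, iMul_zero_left]
        · rw [one_smul, ha x] }
  have hW : ∀ w, w ∈ W ↔ ∀ x, inducedMul n f w x = 0 := fun w => Iff.rfl
  have hfW : ∀ x, f x + x ∈ W := by
    intro x y
    rw [iMul_add_left, h.diff_ann h4, qv_self]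
  have hfw : ∀ w ∈ W, f w ∈ W := by
    intro w hw x
    rw [h.diff_ann h4, hw x]
  have hadd : ∀ w ∈ W, ∀ x, f (x + w) = f x + f w := by
    intro w hw x
    rw [h.add, iMul_comm, hfw w hw, add_zero]
  obtain ⟨P, hP⟩ := W.subtype.exists_leftInverse_of_injective W.ker_subtype
  have hPw : ∀ w (hw : w ∈ W), P w = ⟨w, hw⟩ := fun w hw =>
    LinearMap.congr_fun hP ⟨w, hw⟩
  let L0 : QV n →+ QV n :=
    { toFun := fun x => x + (P x : QV n) + f (P x : QV n)
      map_zero' := by simp [h.zero]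
      map_add' := by
        intro x y
        rw [map_add, Submodule.coe_add, hadd _ (P y).2]
        ring }
  have hL0 : ∀ x, L0 x = x + (P x : QV n) + f (P x : QV n) := fun x => rfl
  have hL0w : ∀ w ∈ W, L0 w = f w := by
    intro w hw
    rw [hL0, hPw w hw, qv_self, zero_add]
  have hL0W : ∀ x, L0 x + x ∈ W := by
    intro x
    have e : L0 x + x = f (P x : QV n) + (P x : QV n) := by
      rw [hL0]; linear_combination x * qv_two (n := n)
    rw [e]; exact hfW _
  have hinj : Function.Injective (L0.toZModLinearMap 2) := by
    rw [injective_iff_map_eq_zero]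
    intro x hx
    have hx : L0 x = 0 := hx
    have hxW := hL0W x
    rw [hx, zero_add] at hxW
    rw [hL0w x hxW] at hx
    exact f.injective (hx.trans h.zero.symm)
  let L := LinearEquiv.ofInjectiveEndo (L0.toZModLinearMap 2) hinj
  have hL : ∀ x, L x = L0 x := fun x => rfl
  refine semi_of f W L ?_ ?_
  · intro w hw x
    rw [hadd w hw, hL, hL0w w hw]
  · intro x
    have e1 := hL0W (L.symm (f x))
    rw [← hL, LinearEquiv.apply_symm_apply] at e1
    have e2 := W.add_mem e1 (hfW x)
    have e3 : f x + L.symm (f x) + (f x + x) = L.symm (f x) + x := by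
      linear_combination (f x) * qv_two (n := n)
    rwa [e3] at e2

end FinalPart

/-- For a staircase-form permutation gate `π ∈ 𝒞₃` with induced
descending multiplication `eᵢeⱼ := π(eᵢ+eⱼ)+eᵢ+eⱼ`, the following are equivalent:
(1) `π` is semi-Clifford; (2) `π⁻¹ ∈ 𝒞₃`; (3) every coordinate of the polynomial
representation of `π` has degree at most 2; (4) `eᵢeⱼeₗ = 0` for all `i,j,l`. -/
theorem stmt17 (n : ℕ) (hn : 1 ≤ n) (f : QV n ≃ QV n)
    (hf : permGate n f ∈ CliffordLevel n 3) (hst : IsStaircase n ⇑f) :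
    (IsSemiClifford n (permGate n f) ↔ (permGate n f)⁻¹ ∈ CliffordLevel n 3) ∧
    ((permGate n f)⁻¹ ∈ CliffordLevel n 3 ↔
      (∀ (m : Fin n) (T : Finset (Fin n)),
        mlCoeff n (fun v => f v m) T ≠ 0 → T.card ≤ 2)) ∧
    ((∀ (m : Fin n) (T : Finset (Fin n)),
        mlCoeff n (fun v => f v m) T ≠ 0 → T.card ≤ 2) ↔
      (∀ i j l : Fin n,
        inducedMul n ⇑f (inducedMul n ⇑f (stdBasis n i) (stdBasis n j)) (stdBasis n l)
          = 0)) := by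
  have h0 : f 0 = 0 := by
    obtain ⟨L, _, hL, _, hf'⟩ := hst
    rw [hf']; exact staircase_fix L 0 (by simp) hL
  have h : Good n f := good_of f hst fun u a b => aff_of_c3 f hf u a b h0
  have h34 := h.three_iff_four
  have h24 : (permGate n f)⁻¹ ∈ CliffordLevel n 3 ↔ Good.Triple n f := by
    rw [perm_inv]
    exact ⟨two_four f h, four_two f h⟩
  have h12 : IsSemiClifford n (permGate n f) ↔ (permGate n f)⁻¹ ∈ CliffordLevel n 3 := by
    constructor
    · intro hs
      rw [perm_inv, ← perm_star]
      exact semi_inv hf hs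
    · intro h2
      exact four_one f h (h24.1 h2)
  exact ⟨h12, h24.trans h34.symm, h34⟩
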